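/- Let g : ℝ → ℝ be convex and continuous, let S₀ > 0 and τ ≥ 1, and for t = 1, …, τ let U_t ⊆ ℝ be a nonempty bounded set with 0 ∈ U_t. Define g_τ(x) = g(x) and, for t = τ, …, 1, g_{t−1}(x) = ⨆_{Δ ∈ ℝ} ⨅_{r ∈ U_t} (g_t(x·(1+r)) − r·Δ). Then g₀(S₀) = g(S₀); that is, the τ-round lower hedging value of a convex payoff equals the payoff at the initial price. -/

import Mathlib

/-!
The payoff `g` is a fixed point of each backward step, at every price `x`. Since `0 ∈ U`, every
infimum in the step is at most `g x`; conversely, if `m` is a subgradient of `g` at `x`, then the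
choice `Δ = m * x` makes every term of its infimum at least `g x`. Downward induction on `t` then
gives `G t = g` for all `t ≤ τ`. Boundedness of `U` and continuity of `g` make each infimum the
infimum of a set bounded below, so that no junk value of `⨅` interferes.
-/

/-- A convex function on the whole line has a subgradient at every point (the right derivative). -/
lemma exists_subgradient {g : ℝ → ℝ} (hconv : ConvexOn ℝ Set.univ g) (x : ℝ) :
    ∃ m : ℝ, ∀ y, g x + m * (y - x) ≤ g y := by
  have hx : x ∈ interior (Set.univ : Set ℝ) := by simp
  refine ⟨derivWithin g (Set.Ioi x) x, fun y => ?_⟩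
  rcases lt_trichotomy x y with h | rfl | h
  · have := hconv.rightDeriv_le_slope_of_mem_interior hx (Set.mem_univ y) h
    rw [slope_def_field, le_div_iff₀ (sub_pos.2 h)] at this
    linarith
  · simp
  · have := (hconv.slope_le_leftDeriv_of_mem_interior (Set.mem_univ y) hx h).trans
      (hconv.leftDeriv_le_rightDeriv_of_mem_interior hx)
    rw [slope_def_field, div_le_iff₀ (sub_pos.2 h)] at this
    linarith

lemma hedging_step {g : ℝ → ℝ} (hconv : ConvexOn ℝ Set.univ g) (hcont : Continuous g)
    {U : Set ℝ} (hbdd : Bornology.IsBounded U) (h0 : (0 : ℝ) ∈ U) (x : ℝ) :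
    ⨆ Δ : ℝ, ⨅ r : U, (g (x * (1 + (r : ℝ))) - (r : ℝ) * Δ) = g x := by
  have hle : ∀ Δ : ℝ, ⨅ r : U, (g (x * (1 + (r : ℝ))) - (r : ℝ) * Δ) ≤ g x := by
    intro Δ
    have hc : Continuous fun r : ℝ => g (x * (1 + r)) - r * Δ := by fun_prop
    have hb : BddBelow (Set.range fun r : U => g (x * (1 + (r : ℝ))) - (r : ℝ) * Δ) := by
      refine (hbdd.isCompact_closure.bddBelow_image hc.continuousOn).mono ?_
      rintro _ ⟨r, rfl⟩
      exact ⟨r, subset_closure r.2, rfl⟩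
    simpa using ciInf_le hb ⟨0, h0⟩
  have : Nonempty U := ⟨⟨0, h0⟩⟩
  obtain ⟨m, hm⟩ := exists_subgradient hconv x
  refine le_antisymm (ciSup_le hle) (le_ciSup_of_le ⟨g x, ?_⟩ (m * x) (le_ciInf fun r => ?_))
  · rintro _ ⟨Δ, rfl⟩
    exact hle Δ
  · have := hm (x * (1 + r))
    linarith

theorem stmt_8 (g : ℝ → ℝ) (hconv : ConvexOn ℝ Set.univ g) (hcont : Continuous g)
    (S₀ : ℝ) (hS₀ : 0 < S₀) (τ : ℕ) (hτ : 1 ≤ τ)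
    (U : ℕ → Set ℝ) (hne : ∀ t, 1 ≤ t → t ≤ τ → (U t).Nonempty)
    (hbdd : ∀ t, 1 ≤ t → t ≤ τ → Bornology.IsBounded (U t))
    (h0 : ∀ t, 1 ≤ t → t ≤ τ → (0 : ℝ) ∈ U t)
    (G : ℕ → ℝ → ℝ) (hGτ : ∀ x, G τ x = g x)
    (hrec : ∀ t, 1 ≤ t → t ≤ τ → ∀ x, G (t - 1) x =
      ⨆ Δ : ℝ, ⨅ r : U t, (G t (x * (1 + (r : ℝ))) - (r : ℝ) * Δ)) :
    G 0 S₀ = g S₀ := by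
  have key : ∀ t ≤ τ, ∀ x, G t x = g x := by
    intro t ht
    induction ht using Nat.decreasingInduction with
    | self => exact hGτ
    | of_succ k hk ih =>
      intro x
      have h := hrec (k + 1) (by omega) hk x
      simp only [ih, Nat.add_sub_cancel] at h
      rw [h]
      exact hedging_step hconv hcont (hbdd _ (by omega) hk) (h0 _ (by omega) hk) x
  exact key 0 (Nat.zero_le _) S₀
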